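/- Assume λ ∈ ℂ \ ℤ or λ = −1. Then F̃_{−λ/z} is irreducible: the only ℂ-subspaces of F̃ invariant under all the operators G⁺(i−1/2) = −i·Ψ⁺(i−1/2) and G⁻(i−1/2) = −(i+λ)Ψ⁻(i−1/2), i ∈ ℤ, are {0} and F̃. -/

import Mathlib

noncomputable section

/-- The fermionic Fock space `F`: it has basis indexed by pairs `(A, B)` of finite sets of
nonnegative integers, the pair `(A, B)` corresponding to the basis monomial
`Ψ⁺(−n₁−1/2)⋯Ψ⁺(−n_r−1/2)·Ψ⁻(−k₁−1/2)⋯Ψ⁻(−k_s−1/2)·𝟙` where `A = {n₁ > ⋯ > n_r}` and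
`B = {k₁ > ⋯ > k_s}`. -/
abbrev FockF : Type := (Finset ℕ × Finset ℕ) →₀ ℂ

/-- The vacuum vector `𝟙`. -/
def vac : FockF := Finsupp.single (∅, ∅) 1

/-- `(−1)^{#{a ∈ S : a > m}}`. -/
def sgn (S : Finset ℕ) (m : ℕ) : ℂ := (-1 : ℂ) ^ (S.filter fun a => m < a).card

/-- `Ψ⁺(−m−1/2)`: exterior multiplication (creation). -/
def psiPneg (m : ℕ) : Module.End ℂ FockF :=
  Finsupp.lsum ℂ fun AB : Finset ℕ × Finset ℕ => LinearMap.toSpanSingleton ℂ FockF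
    (if m ∈ AB.1 then 0 else sgn AB.1 m • Finsupp.single (insert m AB.1, AB.2) 1)

/-- `Ψ⁺(m+1/2)`: the odd contraction operator pairing with `Ψ⁻(−m−1/2)` (annihilation). -/
def psiPpos (m : ℕ) : Module.End ℂ FockF :=
  Finsupp.lsum ℂ fun AB : Finset ℕ × Finset ℕ => LinearMap.toSpanSingleton ℂ FockF
    (if m ∈ AB.2 then ((-1 : ℂ) ^ AB.1.card * sgn AB.2 m) • Finsupp.single (AB.1, AB.2.erase m) 1
     else 0)

/-- `Ψ⁻(−m−1/2)`: exterior multiplication (creation). -/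
def psiMneg (m : ℕ) : Module.End ℂ FockF :=
  Finsupp.lsum ℂ fun AB : Finset ℕ × Finset ℕ => LinearMap.toSpanSingleton ℂ FockF
    (if m ∈ AB.2 then 0
     else ((-1 : ℂ) ^ AB.1.card * sgn AB.2 m) • Finsupp.single (AB.1, insert m AB.2) 1)

/-- `Ψ⁻(m+1/2)`: the odd contraction operator pairing with `Ψ⁺(−m−1/2)` (annihilation). -/
def psiMpos (m : ℕ) : Module.End ℂ FockF :=
  Finsupp.lsum ℂ fun AB : Finset ℕ × Finset ℕ => LinearMap.toSpanSingleton ℂ FockF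
    (if m ∈ AB.1 then sgn AB.1 m • Finsupp.single (AB.1.erase m, AB.2) 1 else 0)

/-- `PsiP i` is the operator `Ψ⁺(i − 1/2)`, `i ∈ ℤ`. -/
def PsiP (i : ℤ) : Module.End ℂ FockF :=
  if i ≤ 0 then psiPneg (-i).toNat else psiPpos (i - 1).toNat

/-- `PsiM i` is the operator `Ψ⁻(i − 1/2)`, `i ∈ ℤ`. -/
def PsiM (i : ℤ) : Module.End ℂ FockF :=
  if i ≤ 0 then psiMneg (-i).toNat else psiMpos (i - 1).toNat

/-- `G⁺(i−1/2) = (λ − i)·Ψ⁺(i−1/2)`. -/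
def Gplus (lam : ℂ) (i : ℤ) : Module.End ℂ FockF := (lam - (i : ℂ)) • PsiP i

/-- The finite set of indices `k ≥ −p` for which `Ψ⁻(k+i−1/2)` can act nontrivially on the
basis monomial `AB`; outside of it all terms of the locally finite sum defining `G⁻` vanish. -/
def GminusIdx (p : ℕ) (i : ℤ) (AB : Finset ℕ × Finset ℕ) : Finset ℤ :=
  (Finset.Icc (-(p : ℤ)) (-i) ∪ AB.1.image fun a : ℕ => (a : ℤ) + 1 - i).filter
    fun k => -(p : ℤ) ≤ k

/-- `G⁻(i−1/2) = −i·Ψ⁻(i−1/2) + Σ_{k=−p}^∞ χ_{−k}·Ψ⁻(k+i−1/2)` (a locally finite sum). -/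
def Gminus (p : ℕ) (χ : ℤ → ℂ) (i : ℤ) : Module.End ℂ FockF :=
  (-(i : ℂ)) • PsiM i +
    Finsupp.lsum ℂ fun AB : Finset ℕ × Finset ℕ => LinearMap.toSpanSingleton ℂ FockF
      (∑ k ∈ GminusIdx p i AB, χ (-k) • PsiM (k + i) (Finsupp.single AB 1))

end

lemma sgn_sq (S : Finset ℕ) (m : ℕ) : sgn S m * sgn S m = 1 := by
  unfold sgn
  rw [← mul_pow]; simp

lemma sgn_ne (S : Finset ℕ) (m : ℕ) : sgn S m ≠ 0 := by
  intro h
  have := sgn_sq S m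
  simp [h] at this

lemma sgn_erase (S : Finset ℕ) (m : ℕ) : sgn (S.erase m) m = sgn S m := by
  unfold sgn
  congr 2
  ext a
  simp only [Finset.mem_filter, Finset.mem_erase]
  constructor
  · rintro ⟨⟨_, h⟩, h'⟩; exact ⟨h, h'⟩
  · rintro ⟨h, h'⟩; exact ⟨⟨by omega, h⟩, h'⟩

lemma pm_sq (n : ℕ) : (-1 : ℂ) ^ n * (-1 : ℂ) ^ n = 1 := by
  rw [← mul_pow]; simp

lemma psiPneg_single (m : ℕ) (A B : Finset ℕ) :
    psiPneg m (Finsupp.single (A, B) 1) =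
      if m ∈ A then 0 else sgn A m • Finsupp.single (insert m A, B) 1 := by
  simp [psiPneg]

lemma psiPpos_single (m : ℕ) (A B : Finset ℕ) :
    psiPpos m (Finsupp.single (A, B) 1) =
      if m ∈ B then ((-1 : ℂ) ^ A.card * sgn B m) • Finsupp.single (A, B.erase m) 1 else 0 := by
  simp [psiPpos]

lemma psiMneg_single (m : ℕ) (A B : Finset ℕ) :
    psiMneg m (Finsupp.single (A, B) 1) =
      if m ∈ B then 0 else ((-1 : ℂ) ^ A.card * sgn B m) • Finsupp.single (A, insert m B) 1 := by
  simp [psiMneg]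

lemma psiMpos_single (m : ℕ) (A B : Finset ℕ) :
    psiMpos m (Finsupp.single (A, B) 1) =
      if m ∈ A then sgn A m • Finsupp.single (A.erase m, B) 1 else 0 := by
  simp [psiMpos]

lemma filter_fst (m : ℕ) (v : FockF) :
    psiPneg m (psiMpos m v) = v.filter (fun AB => m ∈ AB.1) := by
  induction v using Finsupp.induction_linear with
  | zero => rw [map_zero, map_zero, Finsupp.filter_zero]
  | add f g hf hg => rw [map_add, map_add, hf, hg, Finsupp.filter_add]
  | single AB c =>
    obtain ⟨A, B⟩ := AB
    have : (Finsupp.single (A, B) c : FockF) = c • Finsupp.single (A, B) 1 := by simp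
    rw [this, map_smul, map_smul, Finsupp.filter_smul, psiMpos_single]
    congr 1
    by_cases h : m ∈ A
    · rw [if_pos h, map_smul, psiPneg_single, if_neg (Finset.notMem_erase m A), sgn_erase,
        smul_smul, sgn_sq, one_smul, Finset.insert_erase h,
        Finsupp.filter_single_of_pos _ (by exact h)]
    · rw [if_neg h, map_zero, Finsupp.filter_single_of_neg _ (by exact h)]

lemma filter_snd (m : ℕ) (v : FockF) :
    psiMneg m (psiPpos m v) = v.filter (fun AB => m ∈ AB.2) := by
  induction v using Finsupp.induction_linear with
  | zero => rw [map_zero, map_zero, Finsupp.filter_zero]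
  | add f g hf hg => rw [map_add, map_add, hf, hg, Finsupp.filter_add]
  | single AB c =>
    obtain ⟨A, B⟩ := AB
    have : (Finsupp.single (A, B) c : FockF) = c • Finsupp.single (A, B) 1 := by simp
    rw [this, map_smul, map_smul, Finsupp.filter_smul, psiPpos_single]
    congr 1
    by_cases h : m ∈ B
    · rw [if_pos h, map_smul, psiMneg_single, if_neg (Finset.notMem_erase m B), sgn_erase,
        smul_smul, mul_mul_mul_comm, sgn_sq, pm_sq, one_mul, one_smul, Finset.insert_erase h,
        Finsupp.filter_single_of_pos _ (by exact h)]
    · rw [if_neg h, map_zero, Finsupp.filter_single_of_neg _ (by exact h)]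

lemma PsiM_one : PsiM 1 = psiMpos 0 := by simp [PsiM]

lemma ker_supp {v : FockF} (hv : v ∈ LinearMap.ker (PsiM 1)) {AB : Finset ℕ × Finset ℕ}
    (h : v AB ≠ 0) : 0 ∉ AB.1 := by
  intro h0
  rw [LinearMap.mem_ker, PsiM_one] at hv
  have := filter_fst 0 v
  rw [hv, map_zero] at this
  have h2 := DFunLike.congr_fun this AB
  rw [Finsupp.filter_apply_pos (fun AB : Finset ℕ × Finset ℕ => 0 ∈ AB.1) v h0] at h2
  exact h h2.symm

lemma exists_single (U : Submodule ℂ FockF)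
    (h1 : ∀ m : ℕ, ∀ v ∈ U, v.filter (fun AB => m ∈ AB.1) ∈ U)
    (h2 : ∀ m : ℕ, ∀ v ∈ U, v.filter (fun AB => m ∈ AB.2) ∈ U) :
    ∀ n : ℕ, ∀ v ∈ U, v ≠ 0 → v.support.card = n →
      ∃ AB : Finset ℕ × Finset ℕ, (Finsupp.single AB 1 : FockF) ∈ U := by
  intro n
  induction n using Nat.strong_induction_on with
  | _ n ih =>
  intro v hv hv0 hn
  obtain ⟨X, hX⟩ := Finsupp.ne_iff.mp hv0
  by_cases hall : ∀ Y, v Y ≠ 0 → Y = X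
  · refine ⟨X, ?_⟩
    have : (Finsupp.single X 1 : FockF) = (v X)⁻¹ • v := by
      ext Y
      by_cases hY : Y = X
      · subst hY
        have : v Y ≠ 0 := hX
        simp [this]
      · have : v Y = 0 := by
          by_contra h; exact hY (hall Y h)
        simp [this, Ne.symm hY]
    rw [this]
    exact U.smul_mem _ hv
  · push Not at hall
    obtain ⟨Y, hY, hne⟩ := hall
    -- a separating predicate
    have key : ∀ p : Finset ℕ × Finset ℕ → Prop, ∀ [DecidablePred p], v.filter p ∈ U →
        (∃ Z W, v Z ≠ 0 ∧ v W ≠ 0 ∧ p Z ∧ ¬ p W) →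
        ∃ AB : Finset ℕ × Finset ℕ, (Finsupp.single AB 1 : FockF) ∈ U := by
      intro p _ hp ⟨Z, W, hZ, hW, pZ, pW⟩
      refine ih _ ?_ (v.filter p) hp ?_ rfl
      · rw [← hn]
        apply Finset.card_lt_card
        rw [Finset.ssubset_iff_of_subset]
        · exact ⟨W, by simpa using hW, by simp [pW]⟩
        · intro T; simp; tauto
      · intro h
        have := DFunLike.congr_fun h Z
        rw [Finsupp.filter_apply_pos _ _ pZ] at this
        exact hZ this
    have hsep : (∃ m, ¬ (m ∈ Y.1 ↔ m ∈ X.1)) ∨ (∃ m, ¬ (m ∈ Y.2 ↔ m ∈ X.2)) := by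
      by_contra h
      push Not at h
      apply hne
      ext m
      · exact h.1 m
      · exact h.2 m
    rcases hsep with ⟨m, hm⟩ | ⟨m, hm⟩
    · refine key _ (h1 m v hv) ?_
      by_cases h : m ∈ Y.1
      · exact ⟨Y, X, hY, hX, h, by tauto⟩
      · exact ⟨X, Y, hX, hY, by tauto, h⟩
    · refine key _ (h2 m v hv) ?_
      by_cases h : m ∈ Y.2
      · exact ⟨Y, X, hY, hX, h, by tauto⟩
      · exact ⟨X, Y, hX, hY, by tauto, h⟩

/-- Assume `λ ∈ ℂ \ ℤ` or `λ = −1`.  Then `F̃_{−λ/z}` is irreducible: the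
only `ℂ`-subspaces of `F̃ = Ker_F Ψ⁻(1/2)` invariant under all the operators
`G⁺(i−1/2) = −i·Ψ⁺(i−1/2)` and `G⁻(i−1/2) = −(i+λ)·Ψ⁻(i−1/2)`, `i ∈ ℤ`, are `{0}` and `F̃`. -/
theorem statement6 (lam : ℂ) (hlam : (∀ n : ℤ, lam ≠ (n : ℂ)) ∨ lam = -1)
    (U : Submodule ℂ FockF) (hsub : U ≤ LinearMap.ker (PsiM 1))
    (hU : ∀ i : ℤ, ∀ v ∈ U,
      ((-(i : ℂ)) • PsiP i) v ∈ U ∧ ((-((i : ℂ) + lam)) • PsiM i) v ∈ U) :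
    U = ⊥ ∨ U = LinearMap.ker (PsiM 1) := by
  have hP : ∀ i : ℤ, i ≠ 0 → ∀ v ∈ U, PsiP i v ∈ U := by
    intro i hi v hv
    have h := (hU i v hv).1
    rw [LinearMap.smul_apply] at h
    refine (U.smul_mem_iff ?_).1 h
    simpa using hi
  have hM : ∀ i : ℤ, ∀ v ∈ U, PsiM i v ∈ U := by
    intro i v hv
    by_cases hi1 : i = 1
    · subst hi1
      have : PsiM 1 v = 0 := hsub hv
      rw [this]; exact U.zero_mem
    have h := (hU i v hv).2
    rw [LinearMap.smul_apply] at h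
    refine (U.smul_mem_iff ?_).1 h
    rw [neg_ne_zero]
    intro h0
    rcases hlam with hl | hl
    · apply hl (-i)
      push_cast
      linear_combination h0
    · apply hi1
      have : (i : ℂ) = 1 := by rw [hl] at h0; linear_combination h0
      exact_mod_cast this
  have pneg : ∀ m : ℕ, m ≠ 0 → ∀ v ∈ U, psiPneg m v ∈ U := by
    intro m hm v hv
    have := hP (-(m : ℤ)) (by omega) v hv
    simpa [PsiP] using this
  have ppos : ∀ m : ℕ, ∀ v ∈ U, psiPpos m v ∈ U := by
    intro m v hv
    have := hP ((m : ℤ) + 1) (by omega) v hv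
    rw [PsiP, if_neg (by omega)] at this
    simpa using this
  have mneg : ∀ m : ℕ, ∀ v ∈ U, psiMneg m v ∈ U := by
    intro m v hv
    have := hM (-(m : ℤ)) v hv
    simpa [PsiM] using this
  have mpos : ∀ m : ℕ, ∀ v ∈ U, psiMpos m v ∈ U := by
    intro m v hv
    have := hM ((m : ℤ) + 1) v hv
    rw [PsiM, if_neg (by omega)] at this
    simpa using this
  by_cases hbot : U = ⊥
  · exact Or.inl hbot
  right
  obtain ⟨v, hv, hv0⟩ := U.ne_bot_iff.mp hbot
  obtain ⟨⟨A, B⟩, hAB⟩ := exists_single U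
    (by
      intro m w hw
      by_cases hm : m = 0
      · subst hm
        have h0 : psiMpos 0 w = 0 := by rw [← PsiM_one]; exact hsub hw
        rw [← filter_fst, h0, map_zero]; exact U.zero_mem
      · rw [← filter_fst]
        exact pneg m hm _ (mpos m _ hw))
    (by
      intro m w hw
      rw [← filter_snd]
      exact mneg m _ (ppos m _ hw)) _ v hv hv0 rfl
  have hA : (Finsupp.single (∅, B) 1 : FockF) ∈ U := by
    induction A using Finset.induction_on with
    | empty => exact hAB
    | insert a s ha ih =>
      apply ih
      have := mpos a _ hAB
      rw [psiMpos_single, if_pos (Finset.mem_insert_self a s), Finset.erase_insert ha] at this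
      exact (U.smul_mem_iff (sgn_ne _ _)).1 this
  have hvac : (Finsupp.single (∅, ∅) 1 : FockF) ∈ U := by
    clear hAB
    induction B using Finset.induction_on with
    | empty => exact hA
    | insert a s ha ih =>
      apply ih
      have := ppos a _ hA
      rw [psiPpos_single, if_pos (Finset.mem_insert_self a s), Finset.erase_insert ha] at this
      exact (U.smul_mem_iff (mul_ne_zero (by simp) (sgn_ne _ _))).1 this
  have hB : ∀ T : Finset ℕ, (Finsupp.single (∅, T) 1 : FockF) ∈ U := by
    intro T
    induction T using Finset.induction_on with
    | empty => exact hvac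
    | insert a s ha ih =>
      have := mneg a _ ih
      rw [psiMneg_single, if_neg ha] at this
      exact (U.smul_mem_iff (mul_ne_zero (by simp) (sgn_ne _ _))).1 this
  have hAll : ∀ T S : Finset ℕ, 0 ∉ S → (Finsupp.single (S, T) 1 : FockF) ∈ U := by
    intro T S
    induction S using Finset.induction_on with
    | empty => intro _; exact hB T
    | insert a s ha ih =>
      intro h0
      rw [Finset.mem_insert, not_or] at h0
      have := pneg a (Ne.symm h0.1) _ (ih h0.2)
      rw [psiPneg_single, if_neg ha] at this
      exact (U.smul_mem_iff (sgn_ne _ _)).1 this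
  refine le_antisymm hsub ?_
  intro w hw
  rw [← Finsupp.sum_single w]
  refine U.sum_mem ?_
  intro X hX
  have h0 := ker_supp hw (Finsupp.mem_support_iff.mp hX)
  have : (Finsupp.single X (w X) : FockF) = w X • Finsupp.single (X.1, X.2) 1 := by simp
  rw [this]
  exact U.smul_mem _ (hAll _ _ h0)
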